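/- Let a, b, c be real numbers with 0 < a < c+1, 0 < b+1 < c+1, and c > 0, and set d₁ = a(c−b)/(c(c+1)) (so d₁ > 0). Let F(α,β,γ;w) = ∑_{n=0}^∞ ((α)_n (β)_n / ((γ)_n · n!)) wⁿ for complex w with |w| < 1. Then there exists a probability measure μ on the real interval [−2,2] such that for every complex z with |z − 2| > 4 and F(a,b+1,c+1; −4/(z−2)) ≠ 0 one has (−1/(4d₁)) · ( F(a,b,c; −4/(z−2)) / F(a,b+1,c+1; −4/(z−2)) − 1 ) = ∫_{[−2,2]} 1/(t − z) dμ(t). -/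

import Mathlib

open scoped Nat
open MeasureTheory

/-- The Gauss hypergeometric series `F(a,b,c;z) = ∑ (a)ₙ (b)ₙ / ((c)ₙ n!) zⁿ`. -/
noncomputable def gaussHyper (a b c z : ℂ) : ℂ :=
  ∑' n : ℕ,
    ((ascPochhammer ℂ n).eval a * (ascPochhammer ℂ n).eval b /
      ((ascPochhammer ℂ n).eval c * (n ! : ℂ))) * z ^ n

/-!
Gauss's contiguous relation expands `F(a+1,b+1,c+2;w) / F(a,b+1,c+1;w)` formally into the
continued fraction `1/(1 - k₀w/(1 - k₁w/(1 - ⋯)))` with `kₙ = gₙ(1 - gₙ₊₁)` and `gₙ ∈ [0,1]`.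
For the Jacobi matrix `J` with zero diagonal and off-diagonal entries `√kₙ`, the series
`∑ₙ ⟪e₀, J²ⁿe₀⟫ wⁿ` has the same continued fraction, and the arithmetic-geometric mean inequality
with weights `gₙ` shows that `J` is a self-adjoint contraction on `ℓ²`. Hence the ratio is the
moment generating function `∫ 1/(1 - sw) dν(s)`, where `ν` on `[0,1]` is the image under `t ↦ t²` of
the spectral measure of `J` at `e₀`. One more contiguous relation expresses
`F(a,b,c;w) / F(a,b+1,c+1;w)` through it, and `s ↦ 2 - 4s` carries `ν` to `[-2,2]`.
-/

open PowerSeries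
open scoped PowerSeries ComplexConjugate ENNReal lp InnerProductSpace

section StieltjesFraction

variable {R : Type*} [CommRing R]

theorem eq_zero_of_forall_eq_C_mul_X_mul_succ {E : ℕ → R⟦X⟧} {r : ℕ → R}
    (hE : ∀ n, E n = C (r n) * X * E (n + 1)) : E 0 = 0 := by
  have coeff_eq_zero : ∀ m n, coeff m (E n) = 0 := by
    intro m
    induction m with
    | zero => intro n; rw [hE, mul_assoc, coeff_C_mul, coeff_zero_X_mul, mul_zero]
    | succ m ih => intro n; rw [hE, mul_assoc, coeff_C_mul, coeff_succ_X_mul, ih, mul_zero]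
  ext m
  rw [coeff_eq_zero, map_zero]

theorem mul_eq_of_stieltjes_recurrence {s : ℕ → R} {P G : ℕ → R⟦X⟧}
    (hP₀ : P 0 = 1 + C (s 0) * X * P 1)
    (hP : ∀ n, P (n + 1) = C (s n) * P n + C (s (n + 1)) * X * P (n + 2))
    (hG : ∀ n, G n = G (n + 1) - C (s n ^ 2) * X * G (n + 2)) :
    P 0 * G 0 = G 1 := by
  -- A Casoratian of the two recurrences: it is divisible by every power of `X`.
  let E : ℕ → R⟦X⟧ := fun n => G (n + 1) * P (n + 1) - C (s n) * G (n + 2) * P n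
  have E_succ : ∀ n, E n = C (s (n + 1)) * X * E (n + 1) := fun n => by
    have hGn := hG (n + 1)
    rw [map_pow] at hGn
    linear_combination P (n + 1) * hGn + G (n + 2) * hP n
  have hG₀ := hG 0
  rw [map_pow] at hG₀
  have hdiff : P 0 * G 0 - G 1 = C (s 0) * X * E 0 := by
    linear_combination P 0 * hG₀ + G 1 * hP₀
  rw [eq_zero_of_forall_eq_C_mul_X_mul_succ E_succ, mul_zero] at hdiff
  exact sub_eq_zero.mp hdiff

/-- The action on sequences of the Jacobi matrix with zero diagonal and off-diagonal entries
`s₀, s₁, …`. -/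
def jacobiMap (s x : ℕ → R) : ℕ → R
  | 0 => s 0 * x 1
  | n + 1 => s n * x n + s (n + 1) * x (n + 2)

theorem iterate_jacobiMap_single_eq_zero (s : ℕ → R) {k n : ℕ} (hkn : k < n) :
    (jacobiMap s)^[k] (Pi.single 0 1) n = 0 := by
  induction k generalizing n with
  | zero => exact Pi.single_eq_of_ne hkn.ne' 1
  | succ k ih =>
    obtain ⟨n, rfl⟩ := Nat.exists_eq_add_of_lt hkn
    rw [Function.iterate_succ_apply', jacobiMap, ih (by lia), ih (by lia)]
    ring

theorem mk_iterate_jacobiMap_mul_eq {s : ℕ → R} {G : ℕ → R⟦X⟧}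
    (hG : ∀ n, G n = G (n + 1) - C (s n ^ 2) * X * G (n + 2)) :
    PowerSeries.mk (fun k => (jacobiMap s)^[2 * k] (Pi.single 0 1) 0) * G 0 = G 1 := by
  -- The `(n, 0)` entry of the `m`-th power of the Jacobi matrix is `0` unless `m - n` is even.
  let P : ℕ → R⟦X⟧ := fun n => .mk fun k => (jacobiMap s)^[2 * k + n] (Pi.single 0 1) n
  refine mul_eq_of_stieltjes_recurrence (P := P) (s := s) ?_ (fun n => ?_) hG
  · ext (_ | k)
    · simp [P, mul_assoc]
    · rw [map_add, mul_assoc, coeff_C_mul, coeff_succ_X_mul, coeff_one, if_neg k.succ_ne_zero,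
        zero_add, coeff_mk, coeff_mk]
      exact congrFun (Function.iterate_succ_apply' (jacobiMap s) (2 * k + 1) _) 0
  · have iterate_succ (k : ℕ) : (jacobiMap s)^[2 * k + (n + 1)] (Pi.single 0 1) (n + 1) =
        s n * (jacobiMap s)^[2 * k + n] (Pi.single 0 1) n +
          s (n + 1) * (jacobiMap s)^[2 * k + n] (Pi.single 0 1) (n + 2) :=
      congrFun (Function.iterate_succ_apply' (jacobiMap s) (2 * k + n) _) (n + 1)
    ext (_ | k) <;> rw [map_add, mul_assoc, coeff_C_mul, coeff_C_mul, coeff_mk, coeff_mk,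
      iterate_succ]
    · rw [coeff_zero_X_mul, iterate_jacobiMap_single_eq_zero s (n := n + 2) (by lia)]
    · rw [coeff_succ_X_mul, coeff_mk, show 2 * (k + 1) + n = 2 * k + (n + 2) by ring]

end StieltjesFraction

section JacobiOperator

variable {𝕜 : Type*} [RCLike 𝕜]

theorem lp_two_hasSum_norm_sq {ι : Type*} {E : ι → Type*} [∀ i, NormedAddCommGroup (E i)]
    (x : lp E 2) :
    HasSum (fun i => ‖x i‖ ^ 2) (‖x‖ ^ 2) := by
  simpa using lp.hasSum_norm (p := 2) (by norm_num) x

theorem hasSum_norm_sq_tail (x : ℓ²(ℕ, 𝕜)) :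
    HasSum (fun n => ‖x (n + 1)‖ ^ 2) (‖x‖ ^ 2 - ‖x 0‖ ^ 2) := by
  simpa using (hasSum_nat_add_iff' 1).mpr (lp_two_hasSum_norm_sq x)

/-- The left shift `(x₀, x₁, …) ↦ (x₁, x₂, …)` on `ℓ²`. -/
noncomputable def leftShift : ℓ²(ℕ, 𝕜) →L[𝕜] ℓ²(ℕ, 𝕜) :=
  LinearMap.mkContinuous
    { toFun x := ⟨fun n => x (n + 1), memℓp_gen <| by
        simpa using (hasSum_norm_sq_tail x).summable⟩
      map_add' _ _ := rfl
      map_smul' _ _ := rfl }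
    1 fun x => by
      rw [one_mul]
      refine lp.norm_le_of_tsum_le (by norm_num) (norm_nonneg x) ?_
      simp only [ENNReal.toReal_ofNat, Real.rpow_ofNat]
      exact (hasSum_norm_sq_tail x).tsum_eq.trans_le (sub_le_self _ (sq_nonneg _))

/-- The weighted left shift `x ↦ (s₀ x₁, s₁ x₂, …)` on `ℓ²`: the part of a Jacobi matrix above the
diagonal. -/
noncomputable def weightedShift (s : ℓ^∞(ℕ, 𝕜)) : ℓ²(ℕ, 𝕜) →L[𝕜] ℓ²(ℕ, 𝕜) :=
  lp.holderL 2 (fun _ => .mul 𝕜 𝕜) (K := 1) (fun _ => by simp) s ∘L leftShift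

theorem weightedShift_apply (s : ℓ^∞(ℕ, 𝕜)) (x : ℓ²(ℕ, 𝕜)) (n : ℕ) :
    weightedShift s x n = s n * x (n + 1) := rfl

theorem adjoint_weightedShift_apply_zero (s : ℓ^∞(ℕ, 𝕜)) (x : ℓ²(ℕ, 𝕜)) :
    (weightedShift s).adjoint x 0 = 0 := by
  have h : weightedShift s (lp.single 2 0 1) = 0 := by
    ext n
    simp [weightedShift_apply]
  have := ContinuousLinearMap.adjoint_inner_right (weightedShift s) (lp.single 2 0 1) x
  simpa [h, lp.inner_single_left] using this

theorem adjoint_weightedShift_apply_succ (s : ℓ^∞(ℕ, 𝕜)) (x : ℓ²(ℕ, 𝕜)) (n : ℕ) :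
    (weightedShift s).adjoint x (n + 1) = conj (s n) * x n := by
  have h : weightedShift s (lp.single 2 (n + 1) 1) = lp.single 2 n (s n) := by
    ext m
    rcases eq_or_ne m n with rfl | hmn <;> simp [weightedShift_apply, *]
  have := ContinuousLinearMap.adjoint_inner_right (weightedShift s) (lp.single 2 (n + 1) 1) x
  simpa [h, lp.inner_single_left, mul_comm] using this

/-- The Jacobi operator on `ℓ²` with zero diagonal, with entries `s₀, s₁, …` above the diagonal and
their conjugates below it. -/
noncomputable def jacobiOperator (s : ℓ^∞(ℕ, 𝕜)) : ℓ²(ℕ, 𝕜) →L[𝕜] ℓ²(ℕ, 𝕜) :=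
  weightedShift s + (weightedShift s).adjoint

theorem isSelfAdjoint_jacobiOperator (s : ℓ^∞(ℕ, 𝕜)) : IsSelfAdjoint (jacobiOperator s) :=
  IsSelfAdjoint.add_star_self _

theorem coe_jacobiOperator_apply {s : ℓ^∞(ℕ, 𝕜)} (hs : IsSelfAdjoint s) (x : ℓ²(ℕ, 𝕜)) :
    ⇑(jacobiOperator s x) = jacobiMap s x := by
  have conj_s (n : ℕ) : conj (s n) = s n := congrFun (congrArg (⇑) hs) n
  funext n
  rw [jacobiOperator, add_apply, lp.coeFn_add, Pi.add_apply, weightedShift_apply]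
  cases n with
  | zero => rw [adjoint_weightedShift_apply_zero, add_zero, jacobiMap]
  | succ n => rw [adjoint_weightedShift_apply_succ, conj_s, add_comm, jacobiMap]

theorem coe_jacobiOperator_pow_apply {s : ℓ^∞(ℕ, 𝕜)} (hs : IsSelfAdjoint s) (k : ℕ)
    (x : ℓ²(ℕ, 𝕜)) : ⇑((jacobiOperator s ^ k) x) = (jacobiMap s)^[k] x := by
  induction k with
  | zero => rfl
  | succ k ih =>
    rw [pow_succ', mul_apply_eq_comp, coe_jacobiOperator_apply hs, ih,
      Function.iterate_succ_apply']

theorem two_mul_norm_mul_mul_le {F : Type*} [NormedDivisionRing F] {p q : ℝ} (hp : 0 ≤ p)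
    (hq : 0 ≤ q) {r x y : F} (hr : ‖r‖ ^ 2 ≤ p * q) :
    2 * ‖x * r * y‖ ≤ p * ‖x‖ ^ 2 + q * ‖y‖ ^ 2 := by
  have hr' : ‖r‖ ≤ √p * √q := by
    rw [← Real.sqrt_mul hp]
    exact Real.le_sqrt_of_sq_le hr
  calc 2 * ‖x * r * y‖ = 2 * ‖r‖ * (‖x‖ * ‖y‖) := by rw [norm_mul, norm_mul]; ring
    _ ≤ 2 * (√p * √q) * (‖x‖ * ‖y‖) := by gcongr
    _ = 2 * (√p * ‖x‖) * (√q * ‖y‖) := by ring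
    _ ≤ (√p * ‖x‖) ^ 2 + (√q * ‖y‖) ^ 2 := two_mul_le_add_sq _ _
    _ = p * ‖x‖ ^ 2 + q * ‖y‖ ^ 2 := by rw [mul_pow, mul_pow, Real.sq_sqrt hp, Real.sq_sqrt hq]

theorem two_mul_norm_inner_weightedShift_le {s : ℓ^∞(ℕ, 𝕜)} {g : ℕ → ℝ}
    (hg : ∀ n, g n ∈ Set.Icc 0 1) (hs : ∀ n, ‖s n‖ ^ 2 ≤ g n * (1 - g (n + 1))) (x : ℓ²(ℕ, 𝕜)) :
    2 * ‖⟪x, weightedShift s x⟫_𝕜‖ ≤ ‖x‖ ^ 2 := by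
  have one_sub_nonneg (n : ℕ) : 0 ≤ 1 - g n := sub_nonneg.mpr (hg n).2
  have summable_g : Summable fun n => g n * ‖x n‖ ^ 2 :=
    (lp_two_hasSum_norm_sq x).summable.of_nonneg_of_le
      (fun n => mul_nonneg (hg n).1 (sq_nonneg _))
      (fun n => mul_le_of_le_one_left (sq_nonneg _) (hg n).2)
  have hasSum_one_sub :
      HasSum (fun n => (1 - g n) * ‖x n‖ ^ 2) (‖x‖ ^ 2 - ∑' n, g n * ‖x n‖ ^ 2) := by
    simpa only [one_sub_mul] using (lp_two_hasSum_norm_sq x).sub summable_g.hasSum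
  have hasSum_bound : HasSum (fun n => g n * ‖x n‖ ^ 2 + (1 - g (n + 1)) * ‖x (n + 1)‖ ^ 2)
      (‖x‖ ^ 2 - (1 - g 0) * ‖x 0‖ ^ 2) := by
    convert summable_g.hasSum.add ((hasSum_nat_add_iff' 1).mpr hasSum_one_sub) using 1
    rw [Finset.sum_range_one]
    ring
  have norm_term_le (n : ℕ) : ‖2 * ⟪x n, weightedShift s x n⟫_𝕜‖ ≤
      g n * ‖x n‖ ^ 2 + (1 - g (n + 1)) * ‖x (n + 1)‖ ^ 2 := by
    have := two_mul_norm_mul_mul_le (hg n).1 (one_sub_nonneg (n + 1)) (hs n)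
      (x := conj (x n)) (y := x (n + 1))
    simpa [weightedShift_apply, mul_comm, mul_left_comm] using this
  calc 2 * ‖⟪x, weightedShift s x⟫_𝕜‖ = ‖∑' n, 2 * ⟪x n, weightedShift s x n⟫_𝕜‖ := by
        rw [tsum_mul_left, ← lp.inner_eq_tsum, norm_mul, RCLike.norm_ofNat]
    _ ≤ ‖x‖ ^ 2 - (1 - g 0) * ‖x 0‖ ^ 2 := tsum_of_norm_bounded hasSum_bound norm_term_le
    _ ≤ ‖x‖ ^ 2 := sub_le_self _ (mul_nonneg (one_sub_nonneg 0) (sq_nonneg _))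

theorem abs_re_inner_jacobiOperator_le {s : ℓ^∞(ℕ, 𝕜)} {g : ℕ → ℝ}
    (hg : ∀ n, g n ∈ Set.Icc 0 1) (hs : ∀ n, ‖s n‖ ^ 2 ≤ g n * (1 - g (n + 1))) (x : ℓ²(ℕ, 𝕜)) :
    |RCLike.re ⟪x, jacobiOperator s x⟫_𝕜| ≤ ‖x‖ ^ 2 := by
  have h : RCLike.re ⟪x, jacobiOperator s x⟫_𝕜 = 2 * RCLike.re ⟪x, weightedShift s x⟫_𝕜 := by
    rw [jacobiOperator, add_apply, inner_add_right, ContinuousLinearMap.adjoint_inner_right,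
      map_add, inner_re_symm (weightedShift s x) x, two_mul]
  rw [h, abs_mul, abs_two]
  refine le_trans ?_ (two_mul_norm_inner_weightedShift_le hg hs x)
  gcongr
  exact RCLike.abs_re_le_norm _

theorem norm_jacobiOperator_le_one {s : ℓ^∞(ℕ, 𝕜)} {g : ℕ → ℝ}
    (hg : ∀ n, g n ∈ Set.Icc 0 1) (hs : ∀ n, ‖s n‖ ^ 2 ≤ g n * (1 - g (n + 1))) :
    ‖jacobiOperator s‖ ≤ 1 := by
  rw [ContinuousLinearMap.norm_eq_iSup_rayleighQuotient _
    (isSelfAdjoint_jacobiOperator s).isSymmetric]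
  refine ciSup_le fun x => ?_
  rw [ContinuousLinearMap.rayleighQuotient, abs_div, abs_sq,
    ContinuousLinearMap.reApplyInnerSelf_apply, inner_re_symm]
  exact div_le_one_of_le₀ (abs_re_inner_jacobiOperator_le hg hs x) (sq_nonneg _)

end JacobiOperator

section SpectralMeasure

variable {H : Type*} [NormedAddCommGroup H] [InnerProductSpace ℂ H] [CompleteSpace H]
  {T : H →L[ℂ] H}

/-- The positive functional `f ↦ ⟪x, f(T) x⟫` on the continuous functions on the (compact)
spectrum of a self-adjoint operator `T`, which represents the spectral measure of `T` at `x`. -/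
noncomputable def spectralFunctional (hT : IsSelfAdjoint T) (x : H) :
    CompactlySupportedContinuousMap (spectrum ℝ T) ℝ →ₚ[ℝ] ℝ :=
  .mk₀
    { toFun f := (⟪x, cfcHom (R := ℝ) hT f x⟫_ℂ).re
      map_add' f g := by
        change (⟪x, cfcHom (R := ℝ) hT (f.toContinuousMap + g.toContinuousMap) x⟫_ℂ).re = _
        rw [map_add, add_apply, inner_add_right, Complex.add_re]
        rfl
      map_smul' r f := by
        change (⟪x, cfcHom (R := ℝ) hT (r • f.toContinuousMap) x⟫_ℂ).re = _
        rw [map_smul, smul_apply, RCLike.real_smul_eq_coe_smul (K := ℂ), inner_smul_right]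
        exact Complex.re_ofReal_mul _ _ }
    fun f hf => by
      have hpos : 0 ≤ cfcHom (R := ℝ) hT f := (cfcHom_nonneg_iff hT).mpr hf
      exact ((ContinuousLinearMap.nonneg_iff_isPositive _).mp hpos).re_inner_nonneg_right x

/-- The spectral measure of a self-adjoint operator `T` at the vector `x`, as a measure on `ℝ`. -/
noncomputable def spectralMeasure (hT : IsSelfAdjoint T) (x : H) : Measure ℝ :=
  (RealRMK.rieszMeasure (spectralFunctional hT x)).map Subtype.val

theorem integral_spectralMeasure (hT : IsSelfAdjoint T) (x : H) {f : ℝ → ℝ} (hf : Continuous f) :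
    ∫ t, f t ∂spectralMeasure hT x = (⟪x, cfc f T x⟫_ℂ).re := by
  rw [spectralMeasure, integral_map (by fun_prop) hf.aestronglyMeasurable,
    cfc_apply f T hT hf.continuousOn]
  exact RealRMK.integral_rieszMeasure (spectralFunctional hT x)
    ⟨⟨_, hf.continuousOn.domRestrict⟩, .of_compactSpace _⟩

theorem integral_pow_spectralMeasure (hT : IsSelfAdjoint T) (x : H) (n : ℕ) :
    ∫ t, (t : ℂ) ^ n ∂spectralMeasure hT x = ⟪x, (T ^ n) x⟫_ℂ := by
  have coe_re : ((⟪x, (T ^ n) x⟫_ℂ).re : ℂ) = ⟪x, (T ^ n) x⟫_ℂ :=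
    (hT.pow n).isSymmetric.coe_re_inner_self_apply x
  rw [← coe_re, ← cfc_pow_id (R := ℝ) T n hT, ← integral_spectralMeasure hT x (continuous_pow n),
    ← integral_complex_ofReal]
  simp only [Complex.ofReal_pow]

theorem isProbabilityMeasure_spectralMeasure (hT : IsSelfAdjoint T) {x : H} (hx : ‖x‖ = 1) :
    IsProbabilityMeasure (spectralMeasure hT x) := by
  have mass : (((spectralMeasure hT x).real Set.univ : ℝ) : ℂ) = 1 := by
    simpa [inner_self_eq_norm_sq_to_K, hx] using integral_pow_spectralMeasure hT x 0
  rw [Complex.ofReal_eq_one, measureReal_def, ENNReal.toReal_eq_one_iff] at mass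
  exact ⟨mass⟩

theorem ae_abs_le_norm_spectralMeasure (hT : IsSelfAdjoint T) (x : H) :
    ∀ᵐ t ∂spectralMeasure hT x, |t| ≤ ‖T‖ := by
  refine (ae_map_iff (by fun_prop) (measurableSet_le (by fun_prop) (by fun_prop))).mpr
    (.of_forall fun t => ?_)
  have ht : ((t : ℝ) : ℂ) ∈ spectrum ℂ T := (spectrum.algebraMap_mem_iff ℂ).mpr t.2
  have := (spectrum.norm_le_norm_mul_of_mem ht).trans
    (mul_le_of_le_one_right (norm_nonneg T) ContinuousLinearMap.norm_id_le)
  rwa [Complex.norm_real] at this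

end SpectralMeasure

section MomentSeries

/-- The generating function `∑ mₙ Xⁿ` of the moments of a measure `ν` on `ℝ`. -/
noncomputable def momentSeries (ν : Measure ℝ) : ℂ⟦X⟧ :=
  .mk fun n => ∫ s, (s : ℂ) ^ n ∂ν

theorem norm_ofReal_pow_le_one {s : ℝ} (hs : |s| ≤ 1) (n : ℕ) : ‖(s : ℂ) ^ n‖ ≤ 1 := by
  rw [norm_pow, Complex.norm_real]
  exact pow_le_one₀ (norm_nonneg s) hs

theorem summable_norm_coeff_momentSeries {ν : Measure ℝ} [IsFiniteMeasure ν]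
    (hν : ∀ᵐ s ∂ν, |s| ≤ 1) {w : ℂ} (hw : ‖w‖ < 1) :
    Summable fun n => ‖coeff n (momentSeries ν) * w ^ n‖ := by
  have summable_bound : Summable fun n => ν.real Set.univ * ‖w‖ ^ n :=
    (summable_geometric_of_lt_one (norm_nonneg w) hw).mul_left _
  refine summable_bound.of_nonneg_of_le (fun _ => norm_nonneg _) fun n => ?_
  rw [norm_mul, norm_pow, momentSeries, coeff_mk]
  gcongr
  simpa using norm_integral_le_of_norm_le_const (hν.mono fun s hs => norm_ofReal_pow_le_one hs n)

theorem hasSum_momentSeries {ν : Measure ℝ} [IsFiniteMeasure ν] (hν : ∀ᵐ s ∂ν, |s| ≤ 1)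
    {w : ℂ} (hw : ‖w‖ < 1) :
    HasSum (fun n => coeff n (momentSeries ν) * w ^ n) (∫ s : ℝ, 1 / (1 - s * w) ∂ν) := by
  simp only [momentSeries, coeff_mk, ← integral_mul_const]
  refine hasSum_integral_of_dominated_convergence (fun n _ => ‖w‖ ^ n) (fun n => by fun_prop)
    (fun n => hν.mono fun s hs => ?_) (.of_forall fun _ => summable_geometric_of_lt_one
      (norm_nonneg w) hw) (integrable_const _) (hν.mono fun s hs => ?_)
  · rw [norm_mul, norm_pow w]
    exact mul_le_of_le_one_left (by positivity) (norm_ofReal_pow_le_one hs n)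
  · simp only [← mul_pow, one_div]
    refine hasSum_geometric_of_norm_lt_one ?_
    rw [norm_mul, Complex.norm_real]
    exact (mul_le_of_le_one_left (norm_nonneg w) hs).trans_lt hw

theorem exists_integral_pow_eq_iterate_jacobiMap {s g : ℕ → ℝ} (hg : ∀ n, g n ∈ Set.Icc 0 1)
    (hs : ∀ n, s n ^ 2 ≤ g n * (1 - g (n + 1))) :
    ∃ ν : Measure ℝ, IsProbabilityMeasure ν ∧ (∀ᵐ t ∂ν, |t| ≤ 1) ∧
      ∀ n, ∫ t, (t : ℂ) ^ n ∂ν = (jacobiMap fun k => (s k : ℂ))^[n] (Pi.single 0 1) 0 := by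
  have abs_s_le_one (n : ℕ) : |s n| ≤ 1 := by
    refine (sq_le_one_iff_abs_le_one _).mp ((hs n).trans (mul_le_one₀ (hg n).2 ?_ ?_)) <;>
      linarith [(hg (n + 1)).1, (hg (n + 1)).2]
  let s' : ℓ^∞(ℕ, ℂ) := ⟨fun n => s n, memℓp_infty ⟨1, by
    rintro _ ⟨n, rfl⟩
    simpa using abs_s_le_one n⟩⟩
  have s'_selfAdjoint : IsSelfAdjoint s' := by
    ext n
    exact Complex.conj_ofReal (s n)
  have norm_le : ‖jacobiOperator s'‖ ≤ 1 :=
    norm_jacobiOperator_le_one hg fun n => by simpa [s'] using hs n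
  have hT := isSelfAdjoint_jacobiOperator s'
  let e₀ : ℓ²(ℕ, ℂ) := lp.single 2 0 1
  refine ⟨spectralMeasure hT e₀,
    isProbabilityMeasure_spectralMeasure hT (by simp [e₀, lp.norm_single]),
    (ae_abs_le_norm_spectralMeasure hT e₀).mono fun t ht => ht.trans norm_le, fun n => ?_⟩
  rw [integral_pow_spectralMeasure, lp.inner_single_left,
    coe_jacobiOperator_pow_apply s'_selfAdjoint]
  simp [e₀, s', lp.coeFn_single]

theorem exists_momentSeries_mul_eq {g : ℕ → ℝ} (hg : ∀ n, g n ∈ Set.Icc 0 1) {G : ℕ → ℂ⟦X⟧}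
    (hG : ∀ n, G n = G (n + 1) - C ((g n * (1 - g (n + 1)) : ℝ) : ℂ) * X * G (n + 2)) :
    ∃ ν : Measure ℝ, IsProbabilityMeasure ν ∧ (∀ᵐ t ∂ν, t ∈ Set.Icc 0 1) ∧
      momentSeries ν * G 0 = G 1 := by
  let s (n : ℕ) : ℝ := √(g n * (1 - g (n + 1)))
  have sq_s (n : ℕ) : s n ^ 2 = g n * (1 - g (n + 1)) :=
    Real.sq_sqrt (mul_nonneg (hg n).1 (sub_nonneg.mpr (hg (n + 1)).2))
  obtain ⟨ν, hν, abs_le, moments⟩ :=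
    exists_integral_pow_eq_iterate_jacobiMap hg fun n => (sq_s n).le
  refine ⟨ν.map (· ^ 2), Measure.isProbabilityMeasure_map (by fun_prop),
    (ae_map_iff (by fun_prop) measurableSet_Icc).mpr
      (abs_le.mono fun t ht => ⟨sq_nonneg t, (sq_le_one_iff_abs_le_one t).mpr ht⟩), ?_⟩
  convert mk_iterate_jacobiMap_mul_eq (s := fun n => (s n : ℂ)) (G := G) fun n => ?_ using 2
  · ext n
    rw [momentSeries, coeff_mk, coeff_mk, ← moments, integral_map (by fun_prop) (by fun_prop)]
    simp only [Complex.ofReal_pow, pow_mul]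
  · rw [← Complex.ofReal_pow, sq_s]
    exact hG n

end MomentSeries

theorem hasSum_coeff_mul {𝕂 : Type*} [NormedField 𝕂] [CompleteSpace 𝕂] {f g : 𝕂⟦X⟧} {w : 𝕂}
    (hf : Summable fun n => ‖coeff n f * w ^ n‖) (hg : Summable fun n => ‖coeff n g * w ^ n‖) :
    HasSum (fun n => coeff n (f * g) * w ^ n)
      ((∑' n, coeff n f * w ^ n) * ∑' n, coeff n g * w ^ n) := by
  have coeff_mul_pow (n : ℕ) : coeff n (f * g) * w ^ n =
      ∑ kl ∈ Finset.HasAntidiagonal.antidiagonal n,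
        coeff kl.1 f * w ^ kl.1 * (coeff kl.2 g * w ^ kl.2) := by
    rw [coeff_mul, Finset.sum_mul]
    refine Finset.sum_congr rfl fun kl hkl => ?_
    rw [← Finset.HasAntidiagonal.mem_antidiagonal.mp hkl, pow_add, mul_mul_mul_comm]
  simp only [coeff_mul_pow, tsum_mul_tsum_eq_tsum_sum_antidiagonal_of_summable_norm hf hg]
  exact (summable_norm_sum_mul_antidiagonal_of_summable_norm hf hg).of_norm.hasSum

theorem hasSum_coeff_C_mul_X_mul {R : Type*} [CommRing R] [TopologicalSpace R]
    [IsTopologicalRing R] {f : R⟦X⟧} {w v : R} (r : R)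
    (hf : HasSum (fun n => coeff n f * w ^ n) v) :
    HasSum (fun n => coeff n (C r * X * f) * w ^ n) (r * w * v) := by
  have coeff_succ (n : ℕ) :
      coeff (n + 1) (C r * X * f) * w ^ (n + 1) = r * w * (coeff n f * w ^ n) := by
    rw [mul_assoc, coeff_C_mul, coeff_succ_X_mul, pow_succ]
    ring
  rw [← hasSum_nat_add_iff' 1, Finset.sum_range_one, mul_assoc (C r), coeff_C_mul,
    coeff_zero_X_mul, mul_zero, zero_mul, sub_zero]
  simpa only [← mul_assoc (C r), coeff_succ] using hf.mul_left (r * w)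

section Hypergeometric

variable {𝕂 : Type*}

/-- The formal Gauss hypergeometric series `F(a,b,c;X)`; its coefficients are those of Mathlib's
`ordinaryHypergeometricSeries`, so they are `0` from the first `n` with `(c)ₙ = 0` on. -/
noncomputable def gaussSeries [Field 𝕂] (a b c : 𝕂) : 𝕂⟦X⟧ :=
  .mk (ordinaryHypergeometricCoefficient a b c)

theorem gaussSeries_comm [Field 𝕂] (a b c : 𝕂) : gaussSeries a b c = gaussSeries b a c := by
  ext n
  simp only [gaussSeries, coeff_mk, ordinaryHypergeometricCoefficient]
  rw [mul_right_comm (n ! : 𝕂)⁻¹]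

theorem ascPochhammer_succ_eval_left {R : Type*} [CommSemiring R] (x : R) (n : ℕ) :
    (ascPochhammer R (n + 1)).eval x = x * (ascPochhammer R n).eval (x + 1) := by
  simp [ascPochhammer_succ_left]

theorem gaussSeries_eq_sub [Field 𝕂] [CharZero 𝕂] (a b : 𝕂) {c : 𝕂} (hc : ∀ n : ℕ, c + n ≠ 0) :
    gaussSeries a b c = gaussSeries a (b + 1) (c + 1) -
      C (a * (c - b) / (c * (c + 1))) * X * gaussSeries (a + 1) (b + 1) (c + 2) := by
  ext (_ | n)
  · simp [gaussSeries, mul_assoc]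
  have hc₀ : c ≠ 0 := by simpa using hc 0
  have hc₁ : c + 1 ≠ 0 := by simpa using hc 1
  have hcn : c + 1 + n ≠ 0 := by have := hc (n + 1); push_cast at this; rwa [add_assoc, add_comm 1]
  have hpoch : (c + 1) * (ascPochhammer 𝕂 n).eval (c + 2) =
      (ascPochhammer 𝕂 n).eval (c + 1) * (c + 1 + n) := by
    rw [← ascPochhammer_succ_eval, ascPochhammer_succ_eval_left, add_assoc, one_add_one_eq_two]
  have hpoch_ne : (ascPochhammer 𝕂 n).eval (c + 1) ≠ 0 := by
    rw [Ne, ascPochhammer_eval_eq_zero_iff]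
    rintro ⟨k, -, hk⟩
    apply hc (k + 1)
    push_cast
    rw [hk]
    ring
  rw [map_sub, mul_assoc, coeff_C_mul, coeff_succ_X_mul]
  simp only [gaussSeries, coeff_mk, ordinaryHypergeometricCoefficient, Nat.factorial_succ,
    ascPochhammer_succ_eval_left a, ascPochhammer_succ_eval_left b, ascPochhammer_succ_eval_left c,
    ascPochhammer_succ_eval n (b + 1), ascPochhammer_succ_eval n (c + 1),
    eq_div_of_mul_eq hc₁ ((mul_comm _ _).trans hpoch)]
  have hn : ((n : 𝕂) + 1) ≠ 0 := by exact_mod_cast n.succ_ne_zero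
  have hf : (n ! : 𝕂) ≠ 0 := by exact_mod_cast n.factorial_ne_zero
  push_cast
  field_simp
  ring

theorem one_le_radius_ordinaryHypergeometricSeries [RCLike 𝕂] (a b c : 𝕂) :
    1 ≤ (ordinaryHypergeometricSeries 𝕂 a b c).radius := by
  by_cases h : ∀ k : ℕ, (k : 𝕂) ≠ -a ∧ (k : 𝕂) ≠ -b ∧ (k : 𝕂) ≠ -c
  · exact (ordinaryHypergeometricSeries_radius_eq_one 𝕂 a b c h).ge
  push Not at h
  obtain ⟨k, hk⟩ := h
  refine le_of_le_of_eq le_top ?_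
  by_cases ha : (k : 𝕂) = -a
  · rw [← neg_neg a, ← ha, ordinaryHypergeometric_radius_top_of_neg_nat₁]
  by_cases hb : (k : 𝕂) = -b
  · rw [← neg_neg b, ← hb, ordinaryHypergeometric_radius_top_of_neg_nat₂]
  · rw [← neg_neg c, ← hk ha hb, ordinaryHypergeometric_radius_top_of_neg_nat₃]

theorem summable_norm_coeff_gaussSeries [RCLike 𝕂] (a b c : 𝕂) {w : 𝕂} (hw : ‖w‖ < 1) :
    Summable fun n => ‖coeff n (gaussSeries a b c) * w ^ n‖ := by
  have hw' : w ∈ Metric.eball 0 (ordinaryHypergeometricSeries 𝕂 a b c).radius := by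
    rw [Metric.mem_eball, edist_zero_right, ← ofReal_norm]
    exact (ENNReal.ofReal_lt_one.mpr hw).trans_le (one_le_radius_ordinaryHypergeometricSeries a b c)
  simpa only [ordinaryHypergeometricSeries_apply_eq, gaussSeries, coeff_mk, smul_eq_mul] using
    (ordinaryHypergeometricSeries 𝕂 a b c).summable_norm_apply hw'

theorem hasSum_gaussSeries (a b c : ℂ) {w : ℂ} (hw : ‖w‖ < 1) :
    HasSum (fun n => coeff n (gaussSeries a b c) * w ^ n) (gaussHyper a b c w) := by
  have coeff_eq (n : ℕ) : (ascPochhammer ℂ n).eval a * (ascPochhammer ℂ n).eval b /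
      ((ascPochhammer ℂ n).eval c * (n ! : ℂ)) = coeff n (gaussSeries a b c) := by
    rw [gaussSeries, coeff_mk, ordinaryHypergeometricCoefficient]
    ring
  simp only [gaussHyper, coeff_eq]
  exact (summable_norm_coeff_gaussSeries a b c hw).of_norm.hasSum

theorem gaussHyper_eq_sub (a b : ℂ) {c : ℂ} (hc : ∀ n : ℕ, c + n ≠ 0) {w : ℂ} (hw : ‖w‖ < 1) :
    gaussHyper a b c w = gaussHyper a (b + 1) (c + 1) w -
      a * (c - b) / (c * (c + 1)) * w * gaussHyper (a + 1) (b + 1) (c + 2) w := by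
  refine (hasSum_gaussSeries a b c hw).unique ?_
  rw [gaussSeries_eq_sub a b hc]
  simp only [map_sub, sub_mul]
  exact (hasSum_gaussSeries _ _ _ hw).sub (hasSum_coeff_C_mul_X_mul _ (hasSum_gaussSeries _ _ _ hw))

end Hypergeometric

section GaussFraction

/-- The numerator parameters `a, b, a + 1, b + 1, a + 2, …` which occur, two consecutive ones at a
time, in the hypergeometric series along Gauss's continued fraction. -/
def gaussNumerator {R : Type*} [Semiring R] (a b : R) : ℕ → R
  | 0 => a
  | 1 => b
  | n + 2 => gaussNumerator a b n + 1

theorem ofReal_gaussNumerator (a b : ℝ) (n : ℕ) :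
    ((gaussNumerator a b n : ℝ) : ℂ) = gaussNumerator (a : ℂ) b n := by
  induction n using Nat.twoStepInduction with
  | zero => rfl
  | one => rfl
  | more n ih _ => rw [gaussNumerator, Complex.ofReal_add, ih, Complex.ofReal_one, gaussNumerator]

theorem gaussNumerator_succ_mem_Icc {a b c : ℝ} (ha : -1 ≤ a) (hac : a ≤ c) (hb : 0 ≤ b)
    (hbc : b ≤ c) (n : ℕ) : gaussNumerator a b (n + 1) ∈ Set.Icc 0 (c + n) := by
  induction n using Nat.twoStepInduction with
  | zero => simpa [gaussNumerator] using ⟨hb, hbc⟩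
  | one =>
    rw [gaussNumerator, gaussNumerator, Nat.cast_one]
    constructor <;> linarith
  | more n ih _ =>
    rw [gaussNumerator]
    push_cast
    constructor <;> linarith [ih.1, ih.2]

theorem gaussSeries_gaussNumerator_eq_sub {𝕂 : Type*} [Field 𝕂] [CharZero 𝕂] (a b : 𝕂) {c : 𝕂}
    (hc : ∀ n : ℕ, c + n ≠ 0) (n : ℕ) :
    gaussSeries (gaussNumerator a b n) (gaussNumerator a b (n + 1)) (c + n) =
      gaussSeries (gaussNumerator a b (n + 1)) (gaussNumerator a b (n + 2)) (c + (n + 1 : ℕ)) -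
        C (gaussNumerator a b (n + 1) / (c + n) *
            (1 - gaussNumerator a b (n + 2) / (c + (n + 1 : ℕ)))) * X *
          gaussSeries (gaussNumerator a b (n + 2)) (gaussNumerator a b (n + 3))
            (c + (n + 2 : ℕ)) := by
  have hcn (k : ℕ) : c + n + k ≠ 0 := by
    rw [add_assoc, ← Nat.cast_add]
    exact hc (n + k)
  have coeff_eq : gaussNumerator a b (n + 1) / (c + n) *
      (1 - (gaussNumerator a b n + 1) / (c + n + 1)) =
      gaussNumerator a b (n + 1) * (c + n - gaussNumerator a b n) / ((c + n) * (c + n + 1)) := by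
    have h₀ : c + n ≠ 0 := hc n
    have h₁ : c + n + 1 ≠ 0 := by simpa using hcn 1
    field_simp
    ring
  rw [gaussSeries_comm, gaussSeries_eq_sub _ _ hcn, ← coeff_eq,
    gaussSeries_comm (gaussNumerator a b (n + 2))]
  simp only [gaussNumerator, Nat.cast_add, Nat.cast_one, Nat.cast_ofNat, add_assoc]

theorem exists_integral_mul_gaussHyper_eq {a b c : ℝ} (ha : -1 ≤ a) (hac : a ≤ c) (hb : 0 ≤ b)
    (hbc : b ≤ c) (hc : 0 < c) :
    ∃ ν : Measure ℝ, IsProbabilityMeasure ν ∧ (∀ᵐ s ∂ν, s ∈ Set.Icc 0 1) ∧ ∀ w : ℂ, ‖w‖ < 1 →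
      (∫ s : ℝ, 1 / (1 - s * w) ∂ν) * gaussHyper a b c w = gaussHyper (a + 1) b (c + 1) w := by
  let g (n : ℕ) : ℝ := gaussNumerator a b (n + 1) / (c + n)
  let G (n : ℕ) : ℂ⟦X⟧ :=
    gaussSeries (gaussNumerator (a : ℂ) b n) (gaussNumerator (a : ℂ) b (n + 1)) (c + n)
  have hcn (n : ℕ) : 0 < c + n := by positivity
  have g_mem (n : ℕ) : g n ∈ Set.Icc 0 1 := by
    have h := gaussNumerator_succ_mem_Icc ha hac hb hbc n
    exact ⟨div_nonneg h.1 (hcn n).le, div_le_one_of_le₀ h.2 (hcn n).le⟩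
  have G_eq (n : ℕ) :
      G n = G (n + 1) - C ((g n * (1 - g (n + 1)) : ℝ) : ℂ) * X * G (n + 2) := by
    have h := gaussSeries_gaussNumerator_eq_sub (a : ℂ) b (c := c)
      (fun k => by exact_mod_cast (hcn k).ne') n
    simpa [g, G, ofReal_gaussNumerator] using h
  obtain ⟨ν, hν, mem_Icc, hmul⟩ := exists_momentSeries_mul_eq g_mem G_eq
  refine ⟨ν, hν, mem_Icc, fun w hw => ?_⟩
  have abs_le : ∀ᵐ s ∂ν, |s| ≤ 1 := mem_Icc.mono fun s hs => (abs_of_nonneg hs.1).trans_le hs.2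
  have G_zero : G 0 = gaussSeries (a : ℂ) b c := by simp [G, gaussNumerator]
  have G_one : G 1 = gaussSeries (a + 1 : ℂ) b (c + 1) := by
    rw [gaussSeries_comm]
    simp [G, gaussNumerator]
  rw [← (hasSum_momentSeries abs_le hw).tsum_eq, ← (hasSum_gaussSeries a b c hw).tsum_eq]
  refine (hasSum_coeff_mul (summable_norm_coeff_momentSeries abs_le hw)
    (summable_norm_coeff_gaussSeries _ _ _ hw)).unique ?_
  rw [← G_zero, hmul, G_one]
  exact hasSum_gaussSeries _ _ _ hw

theorem exists_gaussHyper_eq_one_sub_mul {a b c : ℝ} (ha : -1 ≤ a) (hac : a ≤ c + 1) (hb : -1 ≤ b)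
    (hbc : b ≤ c) (hc : c ≠ 0) (hc1 : 0 < c + 1) :
    ∃ ν : Measure ℝ, IsProbabilityMeasure ν ∧ (∀ᵐ s ∂ν, s ∈ Set.Icc 0 1) ∧ ∀ w : ℂ, ‖w‖ < 1 →
      gaussHyper a b c w =
        (1 - (a * (c - b) / (c * (c + 1)) : ℝ) * w * ∫ s : ℝ, 1 / (1 - s * w) ∂ν) *
          gaussHyper a (b + 1) (c + 1) w := by
  obtain ⟨ν, hν, mem_Icc, ratio⟩ := exists_integral_mul_gaussHyper_eq (a := a)
    (b := b + 1) (c := c + 1) ha hac (by linarith) (by linarith) hc1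
  refine ⟨ν, hν, mem_Icc, fun w hw => ?_⟩
  have hcn : ∀ n : ℕ, (c : ℂ) + n ≠ 0 := by
    rintro (_ | n)
    · simpa using hc
    · rw [Nat.cast_succ, add_comm (n : ℂ), ← add_assoc]
      exact_mod_cast (add_pos_of_pos_of_nonneg hc1 n.cast_nonneg).ne'
  have ratio_w := ratio w hw
  push_cast [add_assoc, one_add_one_eq_two] at ratio_w ⊢
  rw [gaussHyper_eq_sub a b hcn hw, ← ratio_w]
  ring

end GaussFraction

theorem integral_one_div_sub_map_affine (ν : Measure ℝ) (p q : ℝ) {z : ℂ} (hz : z ≠ p) :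
    ∫ t : ℝ, 1 / ((t : ℂ) - z) ∂ν.map (fun s => p + q * s) =
      1 / (p - z) * ∫ s : ℝ, 1 / (1 - s * (q / (z - p))) ∂ν := by
  rw [integral_map (by fun_prop) (by measurability), ← integral_const_mul]
  congr 1 with s
  have hz' : z - p ≠ 0 := sub_ne_zero.mpr hz
  have factor : ((p + q * s : ℝ) : ℂ) - z = (p - z) * (1 - s * (q / (z - p))) := by
    push_cast
    field_simp
    ring
  rw [factor, one_div_mul_one_div]

theorem stmt_8_general (a b c : ℝ) (ha0 : a ≠ 0) (ha1 : -1 ≤ a) (hac : a ≤ c + 1) (hb : -1 ≤ b)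
    (hbc : b < c) (hc : c ≠ 0) (d1 : ℝ) (hd1 : d1 = a * (c - b) / (c * (c + 1))) :
    ∃ μ : Measure ℝ, IsProbabilityMeasure μ ∧ μ (Set.Icc (-2 : ℝ) 2)ᶜ = 0 ∧
      ∀ z : ℂ, 4 < ‖z - 2‖ →
        gaussHyper (a : ℂ) ((b : ℂ) + 1) ((c : ℂ) + 1) (-4 / (z - 2)) ≠ 0 →
        (-1 / (4 * (d1 : ℂ))) *
            (gaussHyper (a : ℂ) (b : ℂ) (c : ℂ) (-4 / (z - 2)) /
                gaussHyper (a : ℂ) ((b : ℂ) + 1) ((c : ℂ) + 1) (-4 / (z - 2)) - 1) =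
          ∫ t : ℝ, 1 / ((t : ℂ) - z) ∂μ := by
  have hc1 : 0 < c + 1 := by linarith
  obtain ⟨ν, hν, mem_Icc, hF_eq⟩ := exists_gaussHyper_eq_one_sub_mul ha1 hac hb hbc.le hc hc1
  refine ⟨ν.map fun s => 2 + -4 * s, Measure.isProbabilityMeasure_map (by fun_prop), ?_,
    fun z hz hF => ?_⟩
  · refine (ae_map_iff (by fun_prop) measurableSet_Icc).mpr (mem_Icc.mono fun s hs => ?_)
    constructor <;> linarith [hs.1, hs.2]
  have hz2 : z - 2 ≠ 0 := norm_pos_iff.mp (by linarith)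
  have hw : ‖-4 / (z - 2)‖ < 1 := by
    rw [norm_div, norm_neg, RCLike.norm_ofNat, div_lt_one (by linarith)]
    exact hz
  have hd : (d1 : ℂ) ≠ 0 := by
    rw [hd1, Complex.ofReal_ne_zero]
    exact div_ne_zero (mul_ne_zero ha0 (sub_ne_zero.mpr hbc.ne')) (mul_ne_zero hc hc1.ne')
  have transform := integral_one_div_sub_map_affine ν 2 (-4) (sub_ne_zero.mp hz2)
  push_cast at transform
  rw [transform, hF_eq _ hw, mul_div_cancel_right₀ _ hF, ← hd1, ← neg_sub z 2]
  field_simp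
  ring

/-- In the classical case, the m-function `B(a,b,c;z)` is a Stieltjes transform of a
probability measure on `[-2,2]`. -/
theorem stmt_8 (a b c : ℝ) (ha0 : 0 < a) (ha1 : a < c + 1)
    (hb0 : 0 < b + 1) (hb1 : b + 1 < c + 1) (hc : 0 < c)
    (d1 : ℝ) (hd1 : d1 = a * (c - b) / (c * (c + 1))) :
    ∃ μ : Measure ℝ, IsProbabilityMeasure μ ∧ μ (Set.Icc (-2 : ℝ) 2)ᶜ = 0 ∧
      ∀ z : ℂ, 4 < ‖z - 2‖ →
        gaussHyper (a : ℂ) ((b : ℂ) + 1) ((c : ℂ) + 1) (-4 / (z - 2)) ≠ 0 →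
        (-1 / (4 * (d1 : ℂ))) *
            (gaussHyper (a : ℂ) (b : ℂ) (c : ℂ) (-4 / (z - 2)) /
                gaussHyper (a : ℂ) ((b : ℂ) + 1) ((c : ℂ) + 1) (-4 / (z - 2)) - 1) =
          ∫ t : ℝ, 1 / ((t : ℂ) - z) ∂μ := by
  exact stmt_8_general a b c ha0.ne' (by linarith) ha1.le (by linarith) (by linarith) hc.ne' d1 hd1
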